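/- Let p be a prime and let S ⊆ F_p^2 be a set of eight distinct points such that no five points of S are collinear and the eight points do not all lie on a common conic. Then S imposes independent conditions on cubic curves; that is, the F_p-vector space of polynomials in F_p[X,Y] of total degree at most 3 vanishing at every point of S has dimension exactly 2 (codimension 8 in the 10-dimensional space of all polynomials of total degree at most 3). -/

import Mathlib

open scoped Classical

noncomputable section

def zeroSet {p : ℕ} (f : MvPolynomial (Fin 2) (ZMod p)) : Set (Fin 2 → ZMod p) :=
  {x | MvPolynomial.eval x f = 0}

/-- The space of polynomials of total degree at most 3 vanishing at every point of `S`. -/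
def vanishingCubics (p : ℕ) (S : Finset (Fin 2 → ZMod p)) :
    Submodule (ZMod p) (MvPolynomial (Fin 2) (ZMod p)) :=
  MvPolynomial.restrictTotalDegree (Fin 2) (ZMod p) 3 ⊓
    ⨅ q ∈ S, LinearMap.ker (MvPolynomial.aeval (R := ZMod p) q).toLinearMap

/-- A finite set of points is collinear if all its points lie on the zero set of a
polynomial of total degree 1. -/
def CollinearPts {p : ℕ} (T : Finset (Fin 2 → ZMod p)) : Prop :=
  ∃ f : MvPolynomial (Fin 2) (ZMod p), f.totalDegree = 1 ∧ ∀ q ∈ T, q ∈ zeroSet f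

/-- A finite set of points lies on a common conic if all its points lie on the zero set
of a nonzero polynomial of total degree at most 2. -/
def OnCommonConic {p : ℕ} (T : Finset (Fin 2 → ZMod p)) : Prop :=
  ∃ g : MvPolynomial (Fin 2) (ZMod p), g ≠ 0 ∧ g.totalDegree ≤ 2 ∧ ∀ q ∈ T, q ∈ zeroSet g

/-!
Suppose the evaluations at the points of `S` satisfy a nontrivial linear relation `c` on cubics.
Multiplying `c` pointwise by a polynomial `ℓ` of degree at most one gives a relation on conics.
Since no conic contains `S`, the evaluations at `S` span the 6-dimensional dual of the space of
conics, so the relations on conics form a space of dimension `8 - 6 = 2`. The polynomials `ℓ`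
form a space of dimension 3, so some `ℓ ≠ 0` gives the zero relation, which means that the line
`ℓ = 0` contains the support of `c`. Hence this support has at most four points, and these are
separated by products of three linear polynomials, so that `c = 0`.

The same argument works for polynomials of degree `a + b` in any number of variables over a field,
with conics replaced by hypersurfaces of degree `a` and lines by hypersurfaces of degree `b`.
-/

section

open MvPolynomial Module

theorem finrank_ker_linearCombination_add_finrank {ι K V : Type*} [Fintype ι] [DivisionRing K]
    [AddCommGroup V] [Module K V] {v : ι → V} (hv : Submodule.span K (Set.range v) = ⊤) :
    finrank K (LinearMap.ker (Fintype.linearCombination K v)) + finrank K V = Fintype.card ι := by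
  have h := (Fintype.linearCombination K v).finrank_range_add_finrank_ker
  rw [Fintype.range_linearCombination, hv, finrank_top, finrank_fintype_fun_eq_card] at h
  lia

section CommSemiring

variable {σ R : Type*} [CommSemiring R]

/-- Evaluation at the point `x`, as a functional on the polynomials of degree at most `d`. The
points of a set `S` impose independent conditions on these polynomials when
`LinearIndepOn R (evalAt d) S` holds. -/
def evalAt (d : ℕ) (x : σ → R) : Dual R (restrictTotalDegree σ R d) :=
  (aeval (R := R) x).toLinearMap ∘ₗ (restrictTotalDegree σ R d).subtype

@[simp]
theorem evalAt_apply {d : ℕ} (x : σ → R) (f : restrictTotalDegree σ R d) :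
    evalAt d x f = eval x (f : MvPolynomial σ R) := by
  simp [evalAt]

theorem sum_smul_evalAt_eq_zero_iff {d : ℕ} {S : Finset (σ → R)} {c : (σ → R) → R} :
    ∑ x ∈ S, c x • evalAt d x = 0 ↔
      ∀ f : MvPolynomial σ R, f.totalDegree ≤ d → ∑ x ∈ S, c x * eval x f = 0 := by
  simp [LinearMap.ext_iff, mem_restrictTotalDegree]

theorem sum_mul_eval_smul_evalAt_eq_zero {a b : ℕ} {S : Finset (σ → R)} {c : (σ → R) → R}
    (hc : ∑ x ∈ S, c x • evalAt (a + b) x = 0) {g : MvPolynomial σ R} (hg : g.totalDegree ≤ b) :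
    ∑ x ∈ S, (c x * eval x g) • evalAt a x = 0 := by
  rw [sum_smul_evalAt_eq_zero_iff] at hc ⊢
  intro f hf
  have hgf : (g * f).totalDegree ≤ a + b :=
    (totalDegree_mul g f).trans (by lia)
  simpa [mul_assoc] using hc (g * f) hgf

/-- All points of `T` lie on a hypersurface of degree at most `d`, possibly empty or reducible. -/
def OnHypersurface (d : ℕ) (T : Finset (σ → R)) : Prop :=
  ∃ f : MvPolynomial σ R, f ≠ 0 ∧ f.totalDegree ≤ d ∧ ∀ x ∈ T, eval x f = 0

theorem OnHypersurface.mono {d : ℕ} {T U : Finset (σ → R)} (hT : OnHypersurface d T)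
    (hUT : U ⊆ T) : OnHypersurface d U :=
  let ⟨f, hf₀, hfd, hf⟩ := hT
  ⟨f, hf₀, hfd, fun x hx => hf x (hUT hx)⟩

/-- The polynomials of degree at most `d` that vanish at every point of `S`. -/
def vanishingPolynomials (d : ℕ) (S : Finset (σ → R)) : Submodule R (MvPolynomial σ R) :=
  restrictTotalDegree σ R d ⊓ ⨅ x ∈ S, LinearMap.ker (aeval (R := R) x).toLinearMap

theorem mem_dualCoannihilator_span_evalAt {d : ℕ} {S : Finset (σ → R)}
    {f : restrictTotalDegree σ R d} :
    f ∈ (Submodule.span R (evalAt d '' S)).dualCoannihilator ↔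
      ∀ x ∈ S, eval x (f : MvPolynomial σ R) = 0 := by
  rw [← SetLike.mem_coe, Submodule.coe_dualCoannihilator_span]
  simp

theorem map_dualCoannihilator_span_evalAt (d : ℕ) (S : Finset (σ → R)) :
    (Submodule.span R (evalAt d '' S)).dualCoannihilator.map
      (restrictTotalDegree σ R d).subtype = vanishingPolynomials d S := by
  ext f
  simp only [Submodule.mem_map, mem_dualCoannihilator_span_evalAt]
  simp [vanishingPolynomials, and_comm]

theorem finrank_restrictTotalDegree (σ R : Type*) [Fintype σ] [CommSemiring R]
    [StrongRankCondition R] (n : ℕ) :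
    finrank R (restrictTotalDegree σ R n) =
      (n + Fintype.card σ).choose (Fintype.card σ) := by
  let monomials : Finset (σ →₀ ℕ) :=
    (Finset.range (n + 1)).biUnion fun k => Finset.univ.finsuppAntidiag k
  have mem_monomials (m : σ →₀ ℕ) : m ∈ monomials ↔ (m.sum fun _ e => e) ≤ n := by
    simp [monomials, Finsupp.sum_fintype]
  calc finrank R (restrictTotalDegree σ R n)
      = Nat.card {m : σ →₀ ℕ | (m.sum fun _ e => e) ≤ n} :=
        finrank_eq_nat_card_basis (basisRestrictSupport R _)
    _ = monomials.card := by
        rw [← Nat.card_eq_finsetCard]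
        exact Nat.card_congr (Equiv.subtypeEquivRight fun m => (mem_monomials m).symm)
    _ = ∑ k ∈ Finset.range (n + 1), (Fintype.card σ).multichoose k := by
        rw [Finset.card_biUnion]
        · simp [Finset.card_finsuppAntidiag_nat_eq_multichoose]
        · intro k _ l _ hkl
          simp +contextual [Finset.disjoint_left, hkl]
    _ = (n + Fintype.card σ).choose (Fintype.card σ) := Nat.sum_range_multichoose _ _

end CommSemiring

section IsDomain

variable {σ R : Type*} [CommRing R] [IsDomain R]

theorem exists_totalDegree_le_card_separating {T : Finset (σ → R)} {q : σ → R} (hq : q ∉ T) :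
    ∃ f : MvPolynomial σ R, f.totalDegree ≤ T.card ∧ (∀ x ∈ T, eval x f = 0) ∧ eval q f ≠ 0 := by
  have hne (x : T) : ∃ i, (x : σ → R) i ≠ q i :=
    Function.ne_iff.mp fun hxq => hq (hxq ▸ x.2)
  choose i hi using hne
  refine ⟨∏ x : T, (X (i x) - C ((x : σ → R) (i x))), ?_, fun x hx => ?_, ?_⟩
  · calc (∏ x : T, (X (i x) - C ((x : σ → R) (i x)) : MvPolynomial σ R)).totalDegree
        ≤ ∑ x : T, (X (i x) - C ((x : σ → R) (i x)) : MvPolynomial σ R).totalDegree :=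
          totalDegree_finsetProd _ _
      _ ≤ ∑ _x : T, 1 :=
          Finset.sum_le_sum fun x _ => (totalDegree_sub_C_le _ _).trans (totalDegree_X _).le
      _ = T.card := by simp
  · rw [map_prod]
    exact Finset.prod_eq_zero (Finset.mem_univ ⟨x, hx⟩) (by simp)
  · rw [map_prod]
    exact Finset.prod_ne_zero_iff.mpr fun x _ => by simpa [sub_eq_zero] using (hi x).symm

theorem linearIndepOn_evalAt_of_card_le {d : ℕ} {T : Finset (σ → R)} (hT : T.card ≤ d + 1) :
    LinearIndepOn R (evalAt d) (T : Set (σ → R)) := by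
  refine linearIndepOn_finset_iff.mpr fun c hc q hq => ?_
  obtain ⟨f, hfd, hfT, hfq⟩ := exists_totalDegree_le_card_separating (Finset.notMem_erase q T)
  have hsum := sum_smul_evalAt_eq_zero_iff.mp hc f
    (hfd.trans (by rw [Finset.card_erase_of_mem hq]; lia))
  rw [Finset.sum_eq_single_of_mem q hq fun x hx hxq => by
    rw [hfT x (Finset.mem_erase.mpr ⟨hxq, hx⟩), mul_zero]] at hsum
  exact (mul_eq_zero.mp hsum).resolve_right hfq

end IsDomain

section Field

variable {σ F : Type*} [Field F]

theorem span_evalAt_eq_top {d : ℕ} {S : Finset (σ → F)} (hS : ¬ OnHypersurface d S) :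
    Submodule.span F (evalAt d '' (S : Set (σ → F))) = ⊤ := by
  have hbot : (Submodule.span F (evalAt d '' (S : Set (σ → F)))).dualCoannihilator = ⊥ := by
    refine (Submodule.eq_bot_iff _).mpr fun f hf => ?_
    by_contra hf₀
    exact hS ⟨f, by simpa using hf₀, (mem_restrictTotalDegree _ _ _).mp f.2,
      mem_dualCoannihilator_span_evalAt.mp hf⟩
  have := FiniteDimensional.span_of_finite F (S.finite_toSet.image (evalAt d))
  rw [← Subspace.dualCoannihilator_dualAnnihilator_eq (W := Submodule.span F _), hbot,
    Submodule.dualAnnihilator_bot]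

variable [Finite σ]

theorem onHypersurface_support_of_relation {a b : ℕ} {S : Finset (σ → F)}
    (hdim : S.card <
      finrank F (restrictTotalDegree σ F a) + finrank F (restrictTotalDegree σ F b))
    (hS : ¬ OnHypersurface a S) {c : (σ → F) → F} (hc : ∑ x ∈ S, c x • evalAt (a + b) x = 0) :
    OnHypersurface b {x ∈ S | c x ≠ 0} := by
  let relations := LinearMap.ker (Fintype.linearCombination F fun x : S => evalAt a (x : σ → F))
  have hrelations : finrank F relations < finrank F (restrictTotalDegree σ F b) := by
    have hspan := span_evalAt_eq_top hS
    rw [Set.image_eq_range] at hspan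
    have hfinrank : finrank F relations + finrank F (restrictTotalDegree σ F a) = S.card := by
      simpa using finrank_ker_linearCombination_add_finrank hspan
    lia
  let reweight : restrictTotalDegree σ F b →ₗ[F] relations :=
    LinearMap.codRestrict relations (LinearMap.pi fun x : S => c x • evalAt b (x : σ → F)) (by
      intro g
      have := sum_mul_eval_smul_evalAt_eq_zero hc ((mem_restrictTotalDegree _ _ _).mp g.2)
      rw [← Finset.sum_coe_sort] at this
      simpa [relations, Fintype.linearCombination_apply] using this)
  obtain ⟨g, hg, hg₀⟩ := (Submodule.ne_bot_iff _).mp (reweight.ker_ne_bot_of_finrank_lt hrelations)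
  refine ⟨g, by simpa using hg₀, (mem_restrictTotalDegree _ _ _).mp g.2, fun x hx => ?_⟩
  obtain ⟨hxS, hcx⟩ := Finset.mem_filter.mp hx
  have : c x * eval x (g : MvPolynomial σ F) = 0 := by
    simpa [reweight] using congr_fun (congr_arg Subtype.val hg) ⟨x, hxS⟩
  exact (mul_eq_zero.mp this).resolve_left hcx

theorem linearIndepOn_evalAt_add {a b : ℕ} {S : Finset (σ → F)}
    (hdim : S.card <
      finrank F (restrictTotalDegree σ F a) + finrank F (restrictTotalDegree σ F b))
    (hb : ∀ T ⊆ S, T.card = a + b + 2 → ¬ OnHypersurface b T) (ha : ¬ OnHypersurface a S) :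
    LinearIndepOn F (evalAt (a + b)) (S : Set (σ → F)) := by
  refine linearIndepOn_finset_iff.mpr fun c hc => ?_
  have hsupp := onHypersurface_support_of_relation hdim ha hc
  have hcard : ({x ∈ S | c x ≠ 0} : Finset (σ → F)).card ≤ a + b + 1 := by
    by_contra! hlt
    obtain ⟨T, hT, hTcard⟩ := Finset.exists_subset_card_eq hlt
    exact hb T (hT.trans (Finset.filter_subset _ _)) hTcard (hsupp.mono hT)
  have hc' : ∑ x ∈ S with c x ≠ 0, c x • evalAt (a + b) x = 0 := by
    rw [Finset.sum_filter_of_ne (p := fun x => c x ≠ 0), hc]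
    intro x _ hx hcx
    exact hx (by rw [hcx, zero_smul])
  have hindep := linearIndepOn_evalAt_of_card_le hcard
  rw [linearIndepOn_finset_iff] at hindep
  intro x hx
  by_contra hcx
  exact hcx (hindep c hc' x (Finset.mem_filter.mpr ⟨hx, hcx⟩))

theorem finrank_vanishingPolynomials_add_card {d : ℕ} {S : Finset (σ → F)}
    (hS : LinearIndepOn F (evalAt d) (S : Set (σ → F))) :
    finrank F (vanishingPolynomials d S) + S.card = finrank F (restrictTotalDegree σ F d) := by
  have hspan : finrank F (Submodule.span F (evalAt d '' (S : Set (σ → F)))) = S.card := by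
    rw [Set.image_eq_range, finrank_span_eq_card hS]
    simp
  rw [← map_dualCoannihilator_span_evalAt, Submodule.finrank_map_subtype_eq, ← hspan, add_comm,
    Subspace.finrank_add_finrank_dualCoannihilator_eq]

end Field

theorem collinearPts_of_onHypersurface_one {p : ℕ} {T : Finset (Fin 2 → ZMod p)}
    (hT : T.Nonempty) (h : OnHypersurface 1 T) : CollinearPts T := by
  obtain ⟨f, hf₀, hfd, hf⟩ := h
  obtain ⟨x, hx⟩ := hT
  refine ⟨f, le_antisymm hfd (Nat.one_le_iff_ne_zero.mpr fun hdeg => hf₀ ?_), hf⟩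
  have hconst := totalDegree_eq_zero_iff_eq_C.mp hdeg
  have hcoeff : coeff 0 f = 0 := by
    have := hf x hx
    rwa [hconst, eval_C] at this
  rw [hconst, hcoeff, C_0]

theorem eight_points_independent_conditions_general {σ F : Type*} [Fintype σ] [Field F] {a b : ℕ}
    {S : Finset (σ → F)}
    (hS : S.card < (a + Fintype.card σ).choose (Fintype.card σ) +
      (b + Fintype.card σ).choose (Fintype.card σ))
    (hb : ∀ T ⊆ S, T.card = a + b + 2 → ¬ OnHypersurface b T) (ha : ¬ OnHypersurface a S) :
    finrank F (vanishingPolynomials (a + b) S) + S.card =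
      (a + b + Fintype.card σ).choose (Fintype.card σ) := by
  simp only [← finrank_restrictTotalDegree _ F] at hS ⊢
  exact finrank_vanishingPolynomials_add_card (linearIndepOn_evalAt_add hS hb ha)

end

theorem eight_points_independent_conditions
    (p : ℕ) [Fact p.Prime] (S : Finset (Fin 2 → ZMod p)) (hS : S.card = 8)
    (hcol : ∀ T ⊆ S, T.card = 5 → ¬ CollinearPts T)
    (hconic : ¬ OnCommonConic S) :
    Module.finrank (ZMod p) (vanishingCubics p S) = 2 := by
  have h : Module.finrank (ZMod p) (vanishingCubics p S) + S.card = 10 :=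
    eight_points_independent_conditions_general (a := 2) (b := 1) (by simp [hS, Nat.choose])
      (fun T hTS hT h => hcol T hTS hT <|
        collinearPts_of_onHypersurface_one (Finset.card_pos.mp (by lia)) h) hconic
  lia
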